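/- arXiv:2301.05887 — 6 statements merged into one kernel-verified Lean document; each statement's English description precedes it below -/
import Mathlib

section
/- Suppose W is totally singular (W = rad(W)) of dimension s with defect d. Then the orthogonal group O(q,k) is isomorphic to the semidirect product GL_d(k) ⋉ Mat_{d×(s−d)}(k), where GL_d(k) acts on the additive group of d×(s−d) matrices over k by left multiplication. -/
section Defs

variable {k : Type*} [Field k] {W : Type*} [AddCommGroup W] [Module k W]

/-- The orthogonal group of a quadratic space `(W, q)`, as a subgroup of the group of
linear automorphisms of `W`. -/
def orthogonalGroup (q : W → k) : Subgroup (W ≃ₗ[k] W) where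
  carrier := {φ | ∀ w, q (φ w) = q w}
  one_mem' := fun _ => rfl
  mul_mem' := fun {a b} ha hb w => by
    have : (a * b) w = a (b w) := rfl
    rw [this, ha, hb]
  inv_mem' := fun {a} ha w => by
    have h := ha ((a⁻¹ : W ≃ₗ[k] W) w)
    have h2 : a ((a⁻¹ : W ≃ₗ[k] W) w) = w := a.apply_symm_apply w
    rw [h2] at h
    exact h.symm

variable (k) in
/-- The action of `GL_d(k)` on the additive group of `d × e` matrices by
left multiplication, as a homomorphism into the automorphism group. -/
def glLeftMulAction (d e : ℕ) :
    GL (Fin d) k →* MulAut (Multiplicative (Matrix (Fin d) (Fin e) k)) where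
  toFun M :=
    { toFun := fun A => Multiplicative.ofAdd ((M : Matrix (Fin d) (Fin d) k) * A.toAdd)
      invFun := fun A =>
        Multiplicative.ofAdd (((M⁻¹ : GL (Fin d) k) : Matrix (Fin d) (Fin d) k) * A.toAdd)
      left_inv := fun A => by
        have h : ((M⁻¹ : GL (Fin d) k) : Matrix (Fin d) (Fin d) k) *
            ((M : Matrix (Fin d) (Fin d) k) * A.toAdd) = A.toAdd := by
          rw [← Matrix.mul_assoc, Units.inv_mul, Matrix.one_mul]
        simp only [toAdd_ofAdd, h, ofAdd_toAdd]
      right_inv := fun A => by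
        have h : ((M : GL (Fin d) k) : Matrix (Fin d) (Fin d) k) *
            (((M⁻¹ : GL (Fin d) k) : Matrix (Fin d) (Fin d) k) * A.toAdd) = A.toAdd := by
          rw [← Matrix.mul_assoc, Units.mul_inv, Matrix.one_mul]
        simp only [toAdd_ofAdd, h, ofAdd_toAdd]
      map_mul' := fun A C => by
        simp [Matrix.mul_add, ofAdd_add] }
  map_one' := by
    ext A
    simp
  map_mul' := fun M N => by
    ext A
    simp [Matrix.mul_assoc]

end Defs

open Matrix

/-- The representation of `Mat_{d×e}(k) ⋊ GL_d(k)` on `k^d × k^e` sending `(A, M)` to the block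
matrix with rows `(M, A)` and `(0, 1)`. -/
def blockRep (k : Type*) [Field k] (d e : ℕ) :
    (Multiplicative (Matrix (Fin d) (Fin e) k)) ⋊[glLeftMulAction k d e] GL (Fin d) k →*
      Module.End k ((Fin d → k) × (Fin e → k)) where
  toFun x := ((Matrix.mulVecLin (x.right : Matrix (Fin d) (Fin d) k)).coprod
    (Matrix.mulVecLin x.left.toAdd)).prod (LinearMap.snd k _ _)
  map_one' := by
    refine LinearMap.ext fun v => ?_
    simp
  map_mul' x y := by
    refine LinearMap.ext fun v => ?_
    have hact : (glLeftMulAction k d e x.right y.left).toAdd =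
        (x.right : Matrix (Fin d) (Fin d) k) * y.left.toAdd := rfl
    simp [hact, Matrix.mulVec_add, add_left_comm, add_comm]

theorem blockRep_apply {k : Type*} [Field k] {d e : ℕ}
    (x : (Multiplicative (Matrix (Fin d) (Fin e) k)) ⋊[glLeftMulAction k d e] GL (Fin d) k)
    (v : (Fin d → k) × (Fin e → k)) :
    blockRep k d e x v =
      ((x.right : Matrix (Fin d) (Fin d) k) *ᵥ v.1 + x.left.toAdd *ᵥ v.2, v.2) :=
  rfl

theorem blockRep_injective {k : Type*} [Field k] {d e : ℕ} :
    Function.Injective (blockRep k d e) := by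
  intro x y h
  have h' (v) : blockRep k d e x v = blockRep k d e y v := by rw [h]
  simp only [blockRep_apply, Prod.mk.injEq, and_true] at h'
  apply SemidirectProduct.ext
  · refine Multiplicative.toAdd.injective (Matrix.ext_of_mulVec_single fun i => ?_)
    simpa using h' (0, Pi.single i 1)
  · refine Units.ext (Matrix.ext_of_mulVec_single fun i => ?_)
    simpa using h' (Pi.single i 1, 0)

/-- The block representation exhausts the injective endomorphisms of `k^d × k^e` that preserve
the second coordinate. -/
theorem exists_blockRep_eq {k : Type*} [Field k] {d e : ℕ}
    (f : Module.End k ((Fin d → k) × (Fin e → k))) (hf : Function.Injective f)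
    (hsnd : ∀ v, (f v).2 = v.2) : ∃ x, blockRep k d e x = f := by
  set g : (Fin d → k) →ₗ[k] (Fin d → k) := LinearMap.fst k _ _ ∘ₗ f ∘ₗ LinearMap.inl k _ _
  set a : (Fin e → k) →ₗ[k] (Fin d → k) := LinearMap.fst k _ _ ∘ₗ f ∘ₗ LinearMap.inr k _ _
  have hg : Function.Injective (LinearMap.toMatrix' g).mulVec := by
    intro v w h
    simp only [LinearMap.toMatrix'_mulVec] at h
    have : f (v, 0) = f (w, 0) := Prod.ext h (by simp [hsnd])
    exact congrArg Prod.fst (hf this)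
  refine ⟨⟨.ofAdd (LinearMap.toMatrix' a), (Matrix.mulVec_injective_iff_isUnit.mp hg).unit⟩,
    LinearMap.ext fun v => Prod.ext ?_ (hsnd v).symm⟩
  have hv : f v = f (v.1, 0) + f (0, v.2) := by simp [← map_add]
  simp [blockRep_apply, LinearMap.toMatrix'_mulVec, hv, g, a]

/-- A subspace of dimension `d` is the first factor of a splitting `W ≃ k^d × k^(s-d)`. -/
theorem Submodule.exists_equiv_prod_snd_eq_zero_iff {k : Type*} [Field k] {W : Type*}
    [AddCommGroup W] [Module k W] [FiniteDimensional k W] (Z : Submodule k W) {s d : ℕ}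
    (hs : Module.finrank k W = s) (hd : Module.finrank k Z = d) :
    ∃ e : W ≃ₗ[k] (Fin d → k) × (Fin (s - d) → k), ∀ w, (e w).2 = 0 ↔ w ∈ Z := by
  obtain ⟨C, hC⟩ := Z.exists_isCompl
  have hsum := Submodule.finrank_add_eq_of_isCompl hC
  let eZ : Z ≃ₗ[k] (Fin d → k) := LinearEquiv.ofFinrankEq _ _ (by simp [hd])
  let eC : C ≃ₗ[k] (Fin (s - d) → k) :=
    LinearEquiv.ofFinrankEq _ _ (by rw [Module.finrank_fin_fun]; omega)
  refine ⟨(Submodule.prodEquivOfIsCompl Z C hC).symm ≪≫ₗ eZ.prodCongr eC, fun w => ?_⟩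
  simp

/-- For a totally singular form, an automorphism is orthogonal iff it is the identity modulo the
subspace of isotropic vectors. -/
theorem mem_orthogonalGroup_iff_sub_mem {k : Type*} [Field k] [CharP k 2] {W : Type*}
    [AddCommGroup W] [Module k W] {q : W → k} (hadd : ∀ w w', q (w + w') = q w + q w')
    {Z : Submodule k W} (hZ : ∀ w, w ∈ Z ↔ q w = 0) (φ : W ≃ₗ[k] W) :
    φ ∈ orthogonalGroup q ↔ ∀ w, φ w - w ∈ Z := by
  change (∀ w, q (φ w) = q w) ↔ _
  refine forall_congr' fun w => ?_
  have h := hadd (φ w - w) w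
  rw [sub_add_cancel] at h
  rw [hZ, h, add_eq_right]

/-- If `W` is totally singular of dimension `s` with defect `d`, then
`O(q,k) ≅ GL_d(k) ⋉ Mat_{d×(s-d)}(k)`, the action being left multiplication. -/
theorem stmt_3
    {k : Type*} [Field k] [CharP k 2]
    {W : Type*} [AddCommGroup W] [Module k W] [FiniteDimensional k W]
    (q : W → k) (hq : ∀ (a : k) (w : W), q (a • w) = a ^ 2 * q w)
    (B : LinearMap.BilinForm k W)
    (hB : ∀ w w' : W, B w w' = q (w + w') + q w + q w')
    (htotsing : ∀ w w' : W, B w w' = 0)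
    (s d : ℕ) (hs : Module.finrank k W = s)
    (Z : Submodule k W) (hZ : ∀ w : W, w ∈ Z ↔ q w = 0)
    (hd : Module.finrank k Z = d) :
    Nonempty
      ((orthogonalGroup q) ≃*
        (Multiplicative (Matrix (Fin d) (Fin (s - d)) k)) ⋊[glLeftMulAction k d (s - d)]
          GL (Fin d) k) := by
  have hadd (w w' : W) : q (w + w') = q w + q w' := by
    have h := hB w w'
    rw [htotsing, add_assoc] at h
    exact CharTwo.add_eq_zero.mp h.symm
  obtain ⟨e, he⟩ := Z.exists_equiv_prod_snd_eq_zero_iff hs hd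
  let F := (LinearMap.GeneralLinearGroup.generalLinearEquiv k W).toMonoidHom.comp
    ((e.symm.conjRingEquiv : _ →* Module.End k W).comp (blockRep k d (s - d))).toHomUnits
  have hF (x w) : F x w = e.symm (blockRep k d (s - d) x (e w)) := rfl
  have hmem (φ : W ≃ₗ[k] W) : φ ∈ orthogonalGroup q ↔ ∀ w, (e (φ w)).2 = (e w).2 := by
    rw [mem_orthogonalGroup_iff_sub_mem hadd hZ]
    refine forall_congr' fun w => ?_
    rw [← he, map_sub, Prod.snd_sub, sub_eq_zero]
  refine ⟨(MulEquiv.ofBijective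
    (F.codRestrict (orthogonalGroup q) fun x => (hmem _).mpr fun w => ?_) ⟨?_, ?_⟩).symm⟩
  · simp [hF, blockRep_apply]
  · intro x y h
    refine blockRep_injective (LinearMap.ext fun v => e.symm.injective ?_)
    simpa [hF] using LinearEquiv.congr_fun (congrArg Subtype.val h) (e.symm v)
  · rintro ⟨φ, hφ⟩
    obtain ⟨x, hx⟩ := exists_blockRep_eq (e.conj φ.toLinearMap)
      (e.injective.comp (φ.injective.comp e.symm.injective))
      (fun v => by simpa using (hmem φ).mp hφ (e.symm v))
    refine ⟨x, Subtype.ext (LinearEquiv.ext fun w => ?_)⟩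
    simp [hF, hx]
end

section
/- Let W be nonsingular of dimension 2r and τ = τ_U a diagonal involution of length l ≤ r with inducing set U. Let V = {v_1,…,v_l} span a totally singular nonsingular completion of span(U) (B(u_i,v_j) = δ_{ij}) and let X be a basis of the orthogonal complement (span(U ∪ V))^⊥, so W = span(U) ⊕ span(X) ⊕ span(V). Then every φ ∈ O(q,k)^{I_τ} has, relative to this decomposition, the block upper-triangular form [[φ_U, φ_U C, φ_U A],[0, φ_X, φ_X D],[0, 0, φ_U^*]], where φ_U ∈ O(q_U,k), φ_X : span(X) → span(X) preserves the bilinear form B restricted to span(X) (i.e. φ_X ∈ Sp(B_X,k)), and φ_U^* is the unique linear automorphism of span(V) with B(φ_U(u), φ_U^*(v)) = B(u,v) for all u ∈ span(U), v ∈ span(V). -/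
open Submodule

/-- A product of transvections along mutually orthogonal isotropic vectors acts additively. -/
theorem prod_transvections_apply {k W ι : Type*} [Field k] [AddCommGroup W] [Module k W]
    (B : LinearMap.BilinForm k W) (u : ι → W) (c : ι → k) (huu : ∀ i j, B (u i) (u j) = 0)
    (t : ι → (W ≃ₗ[k] W)) (ht : ∀ i z, t i z = z + (c i * B (u i) z) • u i)
    (L : List ι) (z : W) :
    (L.map t).prod z = z + (L.map fun i => (c i * B (u i) z) • u i).sum := by
  induction L with
  | nil => simp
  | cons i L ih =>
    have hperp : B (u i) ((L.map fun j => (c j * B (u j) z) • u j).sum) = 0 := by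
      rw [map_list_sum, List.map_map]
      refine List.sum_eq_zero fun a ha => ?_
      obtain ⟨j, -, rfl⟩ := List.mem_map.1 ha
      simp [huu]
    rw [List.map_cons, List.prod_cons, LinearEquiv.mul_apply, ih, ht, map_add, hperp,
      List.map_cons, List.sum_cons]
    simp only [add_zero]
    abel

/-- An automorphism commuting with a product of orthogonal transvections along a family `u` that
has a dual family `v` preserves the span of `u`. -/
theorem map_span_of_commute {k W : Type*} [Field k] [AddCommGroup W] [Module k W]
    (B : LinearMap.BilinForm k W) {l : ℕ} (u v : Fin l → W) (c : Fin l → k) (hc : ∀ i, c i ≠ 0)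
    (huv : ∀ i j, B (u i) (v j) = if i = j then 1 else 0)
    (τ : W ≃ₗ[k] W) (hτ : ∀ z, τ z = z + ∑ i, (c i * B (u i) z) • u i)
    (g : W ≃ₗ[k] W) (hg : ∀ z, τ (g z) = g (τ z)) {a : W} (ha : a ∈ span k (Set.range u)) :
    g a ∈ span k (Set.range u) := by
  have hle : span k (Set.range u) ≤ (span k (Set.range u)).comap (g : W →ₗ[k] W) := by
    rw [span_le]
    rintro _ ⟨j, rfl⟩
    have h := hg (v j)
    rw [hτ, hτ (v j), map_add, add_right_inj] at h
    simp only [huv, mul_ite, mul_one, mul_zero, ite_smul, zero_smul, Finset.sum_ite_eq',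
      Finset.mem_univ, if_true, map_smul] at h
    have h' : g (u j) = (c j)⁻¹ • ∑ i, (c i * B (u i) (g (v j))) • u i := by
      rw [h, inv_smul_smul₀ (hc j)]
    change g (u j) ∈ span k (Set.range u)
    rw [h']
    exact smul_mem _ _ (sum_mem fun i _ => smul_mem _ _ (subset_span ⟨i, rfl⟩))
  exact hle ha

/-- The projections attached to a decomposition `W = SU ⊕ SX ⊕ SV` in which `SU` is totally
isotropic and orthogonal to `SX`, and only `0 ∈ SV` is orthogonal to `SU`. -/
structure BlockProjections {k W : Type*} [Field k] [AddCommGroup W] [Module k W]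
    (B : LinearMap.BilinForm k W) (SU SX SV : Submodule k W) where
  pU : W →ₗ[k] SU
  pX : W →ₗ[k] SX
  pV : W →ₗ[k] SV
  sum_eq : ∀ w, (pV w : W) + pX w + pU w = w
  pX_U : ∀ a ∈ SU, pX a = 0
  pV_U : ∀ a ∈ SU, pV a = 0
  pX_X : ∀ z : SX, pX z = z
  pV_V : ∀ y : SV, pV y = y
  pV_perp : ∀ w, (∀ a ∈ SU, B a w = 0) → pV w = 0
  UU : ∀ a ∈ SU, ∀ b ∈ SU, B a b = 0
  UX : ∀ a ∈ SU, ∀ z ∈ SX, B a z = 0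

namespace BlockProjections

variable {k W : Type*} [Field k] [AddCommGroup W] [Module k W]
  {B : LinearMap.BilinForm k W} {SU SX SV : Submodule k W}

theorem pV_map_X (P : BlockProjections B SU SX SV) (g : W ≃ₗ[k] W)
    (hg : ∀ w w', B (g w) (g w') = B w w') (hU : ∀ a ∈ SU, g.symm a ∈ SU) (z : SX) :
    P.pV (g z) = 0 := by
  refine P.pV_perp _ fun a ha => ?_
  rw [← g.apply_symm_apply a, hg]
  exact P.UX _ (hU a ha) _ z.2

theorem pV_map_pV (P : BlockProjections B SU SX SV) (g : W ≃ₗ[k] W)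
    (hg : ∀ w w', B (g w) (g w') = B w w') (hU : ∀ a ∈ SU, g a ∈ SU)
    (hU' : ∀ a ∈ SU, g.symm a ∈ SU) (y : SV) :
    P.pV (g (P.pV (g.symm y))) = y := by
  have h := congrArg (fun w => P.pV (g w)) (P.sum_eq (g.symm y))
  simp only [map_add, g.apply_symm_apply, P.pV_V, P.pV_map_X g hg hU'] at h
  rw [P.pV_U _ (hU _ (P.pU (g.symm y)).2)] at h
  simpa using h

theorem pX_map_pX (P : BlockProjections B SU SX SV) (g : W ≃ₗ[k] W)
    (hg : ∀ w w', B (g.symm w) (g.symm w') = B w w') (hU : ∀ a ∈ SU, g a ∈ SU) (z : SX) :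
    P.pX (g (P.pX (g.symm z))) = z := by
  have h := congrArg (fun w => P.pX (g w)) (P.sum_eq (g.symm z))
  simp only [map_add, g.apply_symm_apply, P.pX_X, P.pV_map_X g.symm hg hU] at h
  rw [P.pX_U _ (hU _ (P.pU (g.symm z)).2)] at h
  simpa using h

/-- An isometry stabilizing `SU` is block upper-triangular. -/
theorem exists_blocks (P : BlockProjections B SU SX SV) (hsymm : ∀ w w', B w w' = B w' w)
    (g : W ≃ₗ[k] W) (hg : ∀ w w', B (g w) (g w') = B w w')
    (hU : ∀ a ∈ SU, g a ∈ SU) (hU' : ∀ a ∈ SU, g.symm a ∈ SU) :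
    ∃ (gX : SX →ₗ[k] SX) (C : SX →ₗ[k] SU) (ψ : SV ≃ₗ[k] SV)
      (D : SV →ₗ[k] SX) (A : SV →ₗ[k] SU),
      (∀ z : SX, g (z : W) = (gX z : W) + g ((C z : W))) ∧
      (∀ y : SV, g (y : W) = (ψ y : W) + (gX (D y) : W) + g ((A y : W))) ∧
      (∀ z z' : SX, B ((gX z : W)) ((gX z' : W)) = B (z : W) (z' : W)) ∧
      (∀ (a : SU) (y : SV), B (g (a : W)) ((ψ y : W)) = B (a : W) (y : W)) := by
  have hg' : ∀ w w', B (g.symm w) (g.symm w') = B w w' := fun w w' => by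
    rw [← hg, g.apply_symm_apply, g.apply_symm_apply]
  let G : W →ₗ[k] W := g
  let gX : SX →ₗ[k] SX := P.pX ∘ₗ G ∘ₗ SX.subtype
  let T : W →ₗ[k] SU := ((g.symm : W →ₗ[k] W).restrict hU') ∘ₗ P.pU ∘ₗ G
  have hT : ∀ w, g (T w : W) = P.pU (g w) := fun w => g.apply_symm_apply _
  have hgX : ∀ z : SX, g (z : W) = (gX z : W) + g (T z : W) := fun z => by
    have h := P.sum_eq (g z)
    rw [P.pV_map_X g hg hU' z] at h
    rw [hT]
    change g z = (P.pX (g z) : W) + P.pU (g z)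
    simpa using h.symm
  refine ⟨gX, T ∘ₗ SX.subtype,
    LinearEquiv.ofLinearMap (P.pV ∘ₗ G ∘ₗ SV.subtype)
      (P.pV ∘ₗ (g.symm : W →ₗ[k] W) ∘ₗ SV.subtype)
      (LinearMap.ext fun y => P.pV_map_pV g hg hU hU' y)
      (LinearMap.ext fun y => P.pV_map_pV g.symm hg' hU' hU y),
    P.pX ∘ₗ (g.symm : W →ₗ[k] W) ∘ₗ SX.subtype ∘ₗ P.pX ∘ₗ G ∘ₗ SV.subtype,
    T ∘ₗ SV.subtype, hgX, fun y => ?_, fun z z' => ?_, fun a y => ?_⟩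
  · have h : gX (P.pX (g.symm (P.pX (g y)))) = P.pX (g y) := P.pX_map_pX g hg' hU _
    change g y = (P.pV (g y) : W) + (gX (P.pX (g.symm (P.pX (g y)))) : W) + g (T y : W)
    rw [h, hT, P.sum_eq]
  · have h : ∀ z : SX, (gX z : W) = g (z - T z) := fun z => by
      rw [map_sub, hgX z, add_sub_cancel_right]
    rw [h, h, hg]
    simp only [map_sub, LinearMap.sub_apply]
    rw [hsymm z (T z'), P.UX _ (T z').2 _ z.2, P.UX _ (T z).2 _ z'.2,
      P.UU _ (T z).2 _ (T z').2]
    simp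
  · change B (g a) (P.pV (g y) : W) = B a y
    rw [← hg a y]
    conv_rhs => rw [← P.sum_eq (g y)]
    rw [map_add, map_add, P.UX _ (hU _ a.2) _ (P.pX (g y)).2,
      P.UU _ (hU _ a.2) _ (P.pU (g y)).2, add_zero, add_zero]

end BlockProjections

/-- A vector orthogonal to a family is orthogonal to its span. -/
theorem bilin_eq_zero_of_mem_span {k W κ : Type*} [Field k] [AddCommGroup W] [Module k W]
    (B : LinearMap.BilinForm k W) (a : W) {s : κ → W} (hs : ∀ i, B a (s i) = 0)
    (w : W) (hw : w ∈ span k (Set.range s)) : B a w = 0 := by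
  have hle : span k (Set.range s) ≤ LinearMap.ker (B a) := by
    rw [span_le]
    rintro _ ⟨i, rfl⟩
    exact hs i
  exact hle hw

/-- Dual isotropic families together with a spanning family of their orthogonal complement give
block projections. -/
theorem nonempty_blockProjections {k W ι : Type*} [Field k] [AddCommGroup W] [Module k W]
    (B : LinearMap.BilinForm k W) (hsymm : ∀ w w', B w w' = B w' w) {l : ℕ}
    (u v : Fin l → W) (x : ι → W)
    (huu : ∀ i j, B (u i) (u j) = 0) (hvv : ∀ i j, B (v i) (v j) = 0)
    (huv : ∀ i j, B (u i) (v j) = if i = j then 1 else 0)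
    (hux : ∀ i j, B (u i) (x j) = 0) (hvx : ∀ i j, B (v i) (x j) = 0)
    (hspan : span k (Set.range u ∪ Set.range v ∪ Set.range x) = ⊤) :
    Nonempty (BlockProjections B (span k (Set.range u)) (span k (Set.range x))
      (span k (Set.range v))) := by
  have hvu : ∀ i j, B (v i) (u j) = if i = j then 1 else 0 := fun i j => by
    rw [hsymm, huv]
    simp only [eq_comm]
  let fU : W →ₗ[k] W := ∑ i, (B (v i)).smulRight (u i)
  let fV : W →ₗ[k] W := ∑ i, (B (u i)).smulRight (v i)
  let fX : W →ₗ[k] W := LinearMap.id - fU - fV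
  have fU_apply : ∀ w, fU w = ∑ i, B (v i) w • u i := fun w => by simp [fU]
  have fV_apply : ∀ w, fV w = ∑ i, B (u i) w • v i := fun w => by simp [fV]
  have fX_apply : ∀ w, fX w = w - fU w - fV w := fun w => rfl
  have fU_mem : ∀ w, fU w ∈ span k (Set.range u) := fun w => by
    rw [fU_apply]
    exact sum_mem fun i _ => smul_mem _ _ (subset_span ⟨i, rfl⟩)
  have fV_mem : ∀ w, fV w ∈ span k (Set.range v) := fun w => by
    rw [fV_apply]
    exact sum_mem fun i _ => smul_mem _ _ (subset_span ⟨i, rfl⟩)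
  have fX_u : ∀ j, fX (u j) = 0 := fun j => by simp [fX_apply, fU_apply, fV_apply, hvu, huu]
  have fX_v : ∀ j, fX (v j) = 0 := fun j => by simp [fX_apply, fU_apply, fV_apply, huv, hvv]
  have fX_x : ∀ j, fX (x j) = x j := fun j => by simp [fX_apply, fU_apply, fV_apply, hux, hvx]
  have fX_mem : ∀ w, fX w ∈ span k (Set.range x) := by
    have hle : span k (Set.range u ∪ Set.range v ∪ Set.range x) ≤
        (span k (Set.range x)).comap fX := by
      rw [span_le]
      rintro _ ((⟨j, rfl⟩ | ⟨j, rfl⟩) | ⟨j, rfl⟩)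
      · simp [fX_u]
      · simp [fX_v]
      · simpa [fX_x] using subset_span (Set.mem_range_self j)
    exact fun w => hle (hspan ▸ mem_top)
  have fV_perp : ∀ w, (∀ i, B (u i) w = 0) → fV w = 0 := fun w hw => by simp [fV_apply, hw]
  have hUU : ∀ a ∈ span k (Set.range u), ∀ b ∈ span k (Set.range u), B a b = 0 :=
    fun a ha b hb => bilin_eq_zero_of_mem_span B a
      (fun i => hsymm a (u i) ▸ bilin_eq_zero_of_mem_span B (u i) (huu i) a ha) b hb
  have hUX : ∀ a ∈ span k (Set.range u), ∀ b ∈ span k (Set.range x), B a b = 0 :=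
    fun a ha b hb => by
      rw [hsymm]
      refine bilin_eq_zero_of_mem_span B b (fun i => ?_) a ha
      rw [hsymm]
      exact bilin_eq_zero_of_mem_span B (u i) (hux i) b hb
  refine ⟨{
    pU := fU.codRestrict _ fU_mem
    pX := fX.codRestrict _ fX_mem
    pV := fV.codRestrict _ fV_mem
    sum_eq := fun w => ?_
    pX_U := fun a ha => Subtype.ext ?_
    pV_U := fun a ha => Subtype.ext (fV_perp a fun i => hUU _ (subset_span ⟨i, rfl⟩) a ha)
    pX_X := fun z => Subtype.ext ?_
    pV_V := fun y => Subtype.ext ?_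
    pV_perp := fun w hw => Subtype.ext (fV_perp w fun i => hw _ (subset_span ⟨i, rfl⟩))
    UU := hUU
    UX := hUX }⟩
  · change fV w + fX w + fU w = w
    rw [fX_apply]
    abel
  · exact LinearMap.eqOn_span (f := fX) (g := 0) (by rintro _ ⟨j, rfl⟩; exact fX_u j) ha
  · exact LinearMap.eqOn_span (f := fX) (g := LinearMap.id)
      (by rintro _ ⟨j, rfl⟩; exact fX_x j) z.2
  · exact LinearMap.eqOn_span (f := fV) (g := LinearMap.id)
      (by rintro _ ⟨j, rfl⟩; simp [fV_apply, huv]) y.2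

/-- On a nonsingular space of dimension `2r`, every element of
`O(q,k)^{I_τ}` for a diagonal involution `τ = τ_U` of length `l ≤ r` is block
upper-triangular relative to `W = span U ⊕ span X ⊕ span V`, with `φ_U ∈ O(q_U,k)`,
`φ_X ∈ Sp(B_X,k)` and `φ_U^*` determined by `B(φ_U(u), φ_U^*(v)) = B(u,v)`. -/
theorem stmt_14
    {k : Type*} [Field k] [CharP k 2]
    {W : Type*} [AddCommGroup W] [Module k W] [FiniteDimensional k W]
    (q : W → k) (hq : ∀ (a : k) (w : W), q (a • w) = a ^ 2 * q w)
    (B : LinearMap.BilinForm k W)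
    (hB : ∀ w w' : W, B w w' = q (w + w') + q w + q w')
    (hnd : ∀ w : W, (∀ w' : W, B w w' = 0) → w = 0)
    (r l : ℕ) (hlr : l ≤ r) (hdim : Module.finrank k W = 2 * r)
    (u v : Fin l → W) (x : Fin (2 * r - 2 * l) → W)
    (hu0 : ∀ i, q (u i) ≠ 0)
    (huo : ∀ i j, i ≠ j → B (u i) (u j) = 0)
    (hvo : ∀ i j, B (v i) (v j) = 0)
    (huv : ∀ i j, B (u i) (v j) = if i = j then 1 else 0)
    (hux : ∀ i j, B (u i) (x j) = 0)
    (hvx : ∀ i j, B (v i) (x j) = 0)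
    (hxli : LinearIndependent k x)
    (hspan : Submodule.span k (Set.range u ∪ Set.range v ∪ Set.range x) = ⊤)
    (SU SV SX : Submodule k W)
    (hSU : SU = Submodule.span k (Set.range u))
    (hSV : SV = Submodule.span k (Set.range v))
    (hSX : SX = Submodule.span k (Set.range x))
    (hudim : Module.finrank k SU = l)
    (τs : Fin l → (W ≃ₗ[k] W))
    (hτs : ∀ i z, τs i z = z + ((q (u i))⁻¹ * B (u i) z) • u i)
    (τ : W ≃ₗ[k] W)
    (hτ : τ = (List.ofFn τs).reverse.prod)
    (hτ2 : τ * τ = 1) (hτ1 : τ ≠ 1)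
    (hτred : ∀ m < l, ¬ ∃ (w : Fin m → W) (ρs : Fin m → (W ≃ₗ[k] W)),
        (∀ i, q (w i) ≠ 0 ∧ ∀ z, ρs i z = z + ((q (w i))⁻¹ * B (w i) z) • w i) ∧
        τ = (List.ofFn ρs).reverse.prod)
    (φ : W ≃ₗ[k] W) (hφO : ∀ w, q (φ w) = q w) (hfix : τ * φ * τ⁻¹ = φ) :
    ∃ (φX : SX →ₗ[k] SX) (C : SX →ₗ[k] SU) (ψ : SV ≃ₗ[k] SV)
      (D : SV →ₗ[k] SX) (A : SV →ₗ[k] SU),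
      (∀ a : SU, φ (a : W) ∈ SU) ∧
      (∀ a : SU, q (φ (a : W)) = q (a : W)) ∧
      (∀ z : SX, φ (z : W) = (φX z : W) + φ ((C z : W))) ∧
      (∀ y : SV, φ (y : W) = (ψ y : W) + (φX (D y) : W) + φ ((A y : W))) ∧
      (∀ z z' : SX, B ((φX z : W)) ((φX z' : W)) = B (z : W) (z' : W)) ∧
      (∀ (a : SU) (y : SV), B (φ (a : W)) ((ψ y : W)) = B (a : W) (y : W)) := by
  subst hSU hSV hSX
  have hsymm : ∀ w w', B w w' = B w' w := fun w w' => by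
    rw [hB, hB, add_comm w w']
    ring
  have halt : ∀ w, B w w = 0 := fun w => by
    have h0 : q (w + w) = 0 := by
      rw [← two_smul k w, hq, CharTwo.two_eq_zero]
      ring
    rw [hB, h0, zero_add, CharTwo.add_self_eq_zero]
  have huu : ∀ i j, B (u i) (u j) = 0 := fun i j => by
    by_cases h : i = j
    · rw [h, halt]
    · exact huo i j h
  have hτz : ∀ z, τ z = z + ∑ i, ((q (u i))⁻¹ * B (u i) z) • u i := fun z => by
    rw [hτ, List.ofFn_eq_map, ← List.map_reverse,
      prod_transvections_apply B u (fun i => (q (u i))⁻¹) huu τs hτs, List.map_reverse,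
      List.sum_reverse, ← List.ofFn_eq_map, List.sum_ofFn]
  have hcomm : ∀ z, τ (φ z) = φ (τ z) := fun z =>
    LinearEquiv.congr_fun (mul_inv_eq_iff_eq_mul.1 hfix) z
  have hcomm' : ∀ z, τ (φ.symm z) = φ.symm (τ z) := fun z => by
    rw [LinearEquiv.eq_symm_apply, ← hcomm, φ.apply_symm_apply]
  have hc : ∀ i, (q (u i))⁻¹ ≠ 0 := fun i => inv_ne_zero (hu0 i)
  have hU : ∀ a ∈ span k (Set.range u), φ a ∈ span k (Set.range u) := fun a ha =>
    map_span_of_commute B u v _ hc huv τ hτz φ hcomm ha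
  have hU' : ∀ a ∈ span k (Set.range u), φ.symm a ∈ span k (Set.range u) := fun a ha =>
    map_span_of_commute B u v _ hc huv τ hτz φ.symm hcomm' ha
  have hφB : ∀ w w', B (φ w) (φ w') = B w w' := fun w w' => by
    rw [hB, hB, ← map_add, hφO, hφO, hφO]
  obtain ⟨P⟩ := nonempty_blockProjections B hsymm u v x huu hvo huv hux hvx hspan
  obtain ⟨φX, C, ψ, D, A, h⟩ := P.exists_blocks hsymm φ hφB hU hU'
  exact ⟨φX, C, ψ, D, A, fun a => hU a a.2, fun a => hφO a, h⟩
end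

section
/- In the setting of the previous block decomposition (W nonsingular of dimension 2r, τ = τ_U a diagonal involution, W = span(U) ⊕ span(X) ⊕ span(V)), let φ ∈ O(q,k)^{I_τ} have blocks C : span(X) → span(U) and D : span(V) → span(X) as in its block upper-triangular form [[φ_U, φ_U C, φ_U A],[0, φ_X, φ_X D],[0,0, φ_U^*]]. Then B(v, Cx) = B(Dv, x) for all v ∈ span(V) and x ∈ span(X); in particular D is completely determined by C. -/
/-- Two families that are orthogonal for a bilinear form have orthogonal spans. -/
theorem bilin_span_eq_zero {k W ι κ : Type*} [Field k] [AddCommGroup W] [Module k W]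
    (B : LinearMap.BilinForm k W) {f : ι → W} {g : κ → W} (h : ∀ i j, B (f i) (g j) = 0)
    {a b : W} (ha : a ∈ Submodule.span k (Set.range f))
    (hb : b ∈ Submodule.span k (Set.range g)) : B a b = 0 := by
  induction ha, hb using Submodule.span_induction₂ with
  | mem_mem a b ha hb =>
    obtain ⟨i, rfl⟩ := ha
    obtain ⟨j, rfl⟩ := hb
    exact h i j
  | zero_left b hb => simp
  | zero_right a ha => simp
  | add_left a a' b _ _ _ h h' => simp [h, h']
  | add_right a b b' _ _ _ h h' => simp [h, h']
  | smul_left c a b _ _ h => simp [h]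
  | smul_right c a b _ _ h => simp [h]


/-- In the block decomposition `W = span U ⊕ span X ⊕ span V` of an element
`φ ∈ O(q,k)^{I_τ}`, the blocks `C : span X → span U` and `D : span V → span X` satisfy
`B(v, Cx) = B(Dv, x)`; in particular `D` is completely determined by `C`. -/
theorem stmt_15
    {k : Type*} [Field k] [CharP k 2]
    {W : Type*} [AddCommGroup W] [Module k W] [FiniteDimensional k W]
    (q : W → k) (hq : ∀ (a : k) (w : W), q (a • w) = a ^ 2 * q w)
    (B : LinearMap.BilinForm k W)
    (hB : ∀ w w' : W, B w w' = q (w + w') + q w + q w')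
    (hnd : ∀ w : W, (∀ w' : W, B w w' = 0) → w = 0)
    (r l : ℕ) (hlr : l ≤ r) (hdim : Module.finrank k W = 2 * r)
    (u v : Fin l → W) (x : Fin (2 * r - 2 * l) → W)
    (hu0 : ∀ i, q (u i) ≠ 0)
    (huo : ∀ i j, i ≠ j → B (u i) (u j) = 0)
    (hvo : ∀ i j, B (v i) (v j) = 0)
    (huv : ∀ i j, B (u i) (v j) = if i = j then 1 else 0)
    (hux : ∀ i j, B (u i) (x j) = 0)
    (hvx : ∀ i j, B (v i) (x j) = 0)
    (hxli : LinearIndependent k x)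
    (hspan : Submodule.span k (Set.range u ∪ Set.range v ∪ Set.range x) = ⊤)
    (SU SV SX : Submodule k W)
    (hSU : SU = Submodule.span k (Set.range u))
    (hSV : SV = Submodule.span k (Set.range v))
    (hSX : SX = Submodule.span k (Set.range x))
    (hudim : Module.finrank k SU = l)
    (τs : Fin l → (W ≃ₗ[k] W))
    (hτs : ∀ i z, τs i z = z + ((q (u i))⁻¹ * B (u i) z) • u i)
    (τ : W ≃ₗ[k] W)
    (hτ : τ = (List.ofFn τs).reverse.prod)
    (hτ2 : τ * τ = 1) (hτ1 : τ ≠ 1)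
    (hτred : ∀ m < l, ¬ ∃ (w : Fin m → W) (ρs : Fin m → (W ≃ₗ[k] W)),
        (∀ i, q (w i) ≠ 0 ∧ ∀ z, ρs i z = z + ((q (w i))⁻¹ * B (w i) z) • w i) ∧
        τ = (List.ofFn ρs).reverse.prod)
    (φ : W ≃ₗ[k] W) (hφO : ∀ w, q (φ w) = q w) (hfix : τ * φ * τ⁻¹ = φ)
    -- the block upper-triangular form of `φ`
    (φX : SX →ₗ[k] SX) (C : SX →ₗ[k] SU) (ψ : SV ≃ₗ[k] SV)
    (D : SV →ₗ[k] SX) (A : SV →ₗ[k] SU)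
    (hblockU : ∀ a : SU, φ (a : W) ∈ SU)
    (hblockX : ∀ z : SX, φ (z : W) = (φX z : W) + φ ((C z : W)))
    (hblockV : ∀ y : SV, φ (y : W) = (ψ y : W) + (φX (D y) : W) + φ ((A y : W)))
    (hφXSp : ∀ z z' : SX, B ((φX z : W)) ((φX z' : W)) = B (z : W) (z' : W))
    (hψstar : ∀ (a : SU) (y : SV), B (φ (a : W)) ((ψ y : W)) = B (a : W) (y : W)) :
    ∀ (y : SV) (z : SX), B (y : W) ((C z : W)) = B ((D y : W)) (z : W) := by
  subst hSU hSV hSX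
  intro y z
  have hsymm (a b : W) : B a b = B b a := by
    rw [hB, hB, add_comm a b]
    ring
  have hpres (a b : W) : B (φ a) (φ b) = B a b := by
    rw [hB, hB, ← map_add, hφO, hφO, hφO]
  have hself (a : W) : B a a = 0 := by
    have hq0 : q 0 = 0 := by simpa using hq 0 0
    have hadd : a + a = 0 := by
      rw [← two_smul k a, CharTwo.two_eq_zero, zero_smul]
    rw [hB, hadd, hq0, zero_add, CharTwo.add_self_eq_zero]
  have huu (i j : Fin l) : B (u i) (u j) = 0 := by
    rcases eq_or_ne i j with rfl | hij
    · exact hself _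
    · exact huo i j hij
  have hyz : B (φ y) (φ z) = 0 :=
    (hpres y z).trans (bilin_span_eq_zero B hvx y.2 z.2)
  have hVX : B (ψ y : W) (φX z : W) = 0 := bilin_span_eq_zero B hvx (ψ y).2 (φX z).2
  have hVU : B (ψ y : W) (φ (C z : W)) = B (y : W) (C z : W) := by
    rw [hsymm, hψstar, hsymm]
  have hXU : B (φX (D y) : W) (φ (C z : W)) = 0 := by
    rw [hsymm]
    exact bilin_span_eq_zero B hux (hblockU (C z)) (φX (D y)).2
  have hUX : B (φ (A y : W)) (φX z : W) = 0 :=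
    bilin_span_eq_zero B hux (hblockU (A y)) (φX z).2
  have hUU : B (φ (A y : W)) (φ (C z : W)) = 0 :=
    (hpres _ _).trans (bilin_span_eq_zero B huu (A y).2 (C z).2)
  rw [hblockV, hblockX] at hyz
  simp only [map_add, LinearMap.add_apply, hVX, hVU, hXU, hUX, hUU, hφXSp, zero_add,
    add_zero] at hyz
  exact (CharTwo.add_eq_zero.mp hyz).symm
end

section
/- Let W be nonsingular with decomposition W = span(U) ⊕ span(X) ⊕ span(V), where span(U) is totally singular with totally singular nonsingular completion span(V) (B(u_i,v_j) = δ_{ij}) and X is a basis of (span(U ∪ V))^⊥. Assume q restricted to span(U) is anisotropic (q(u) ≠ 0 for all nonzero u ∈ span U). Let x ∈ span(X), ω ∈ k with ω ≠ 0, and let τ_{x,ω}(z) = z + ωB(x,z)x be the symplectic transvection on span(X). Suppose C : span(X) → span(U) is a linear map with q(τ_{x,ω}(z) + Cz) = q(z) for all z ∈ span(X), and let C† : span(V) → span(X) be the linear map determined by B(v, Cz) = B(C†v, z) for all v ∈ span(V), z ∈ span(X). Then there exists a linear map M : span(V) → span(U) such that the block map T = [[id, C, M],[0, τ_{x,ω},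 τ_{x,ω}C†],[0, 0, id]] belongs to O(q,k). -/
/-- Two families that are pairwise orthogonal have orthogonal spans. -/
lemma LinearMap.BilinForm.eq_zero_of_mem_span {R M ι κ : Type*} [CommRing R] [AddCommGroup M]
    [Module R M] (B : LinearMap.BilinForm R M) {f : ι → M} {g : κ → M}
    (h : ∀ i j, B (f i) (g j) = 0) {a b : M} (ha : a ∈ Submodule.span R (Set.range f))
    (hb : b ∈ Submodule.span R (Set.range g)) : B a b = 0 := by
  induction ha using Submodule.span_induction with
  | mem a ha =>
    obtain ⟨i, rfl⟩ := ha
    induction hb using Submodule.span_induction with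
    | mem b hb => obtain ⟨j, rfl⟩ := hb; exact h i j
    | zero => simp
    | add _ _ _ _ h₁ h₂ => simp [h₁, h₂]
    | smul _ _ _ h₁ => simp [h₁]
  | zero => simp
  | add _ _ _ _ h₁ h₂ => simp [h₁, h₂]
  | smul _ _ _ h₁ => simp [h₁]

/-- In characteristic 2, the transvection `w ↦ w + ω B(s,w) s` with `s = 0` or `q s = ω⁻¹`
is an isometry. -/
lemma exists_orthogonal_transvection {k W : Type*} [Field k] [CharP k 2] [AddCommGroup W]
    [Module k W] (q : W → k) (hq : ∀ (a : k) (w : W), q (a • w) = a ^ 2 * q w)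
    (B : LinearMap.BilinForm k W) (hB : ∀ w w' : W, B w w' = q (w + w') + q w + q w')
    (s : W) (ω : k) (hs : s = 0 ∨ q s = ω⁻¹) :
    ∃ T : W ≃ₗ[k] W, (∀ w, T w = w + (ω * B s w) • s) ∧ ∀ w, q (T w) = q w := by
  have h2 : (2 : k) = 0 := CharTwo.two_eq_zero
  have hsymm (a b : W) : B a b = B b a := by rw [hB, hB, add_comm a b]; ring
  have hadd (a b : W) : q (a + b) = q a + q b + B a b := by
    rw [hB]; linear_combination (-(q a) - q b) * h2
  have hself : B s s = 0 := by
    have h0 : q 0 = 0 := by simpa using hq 0 0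
    have hss : s + s = 0 := by rw [← two_smul k, h2, zero_smul]
    rw [hB, hss, h0]; linear_combination q s * h2
  let f : W →ₗ[k] W := LinearMap.id + (ω • B s).smulRight s
  have hf (w : W) : f w = w + (ω * B s w) • s := by simp [f]
  have hinv : Function.Involutive f := fun w => by
    rw [hf, hf]
    simp only [map_add, map_smul, hself, smul_zero, add_zero]
    rw [add_assoc, ← two_smul k, h2, zero_smul, add_zero]
  refine ⟨LinearEquiv.ofInvolutive f hinv, hf, fun w => ?_⟩
  change q (f w) = q w
  rw [hf, hadd, hq, map_smul, smul_eq_mul, hsymm w s]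
  rcases hs with rfl | hs
  · simp
  · rw [hs]
    field_simp
    linear_combination ω * (B s w) ^ 2 * h2

/-- With `W = span U ⊕ span X ⊕ span V` nonsingular, `span U` totally singular
and anisotropic, for a symplectic transvection `τ_{x,ω}` on `span X` and a map
`C : span X → span U` with `q(τ_{x,ω}(z) + Cz) = q(z)`, there exists `M : span V → span U`
such that the block map `[[id, C, M],[0, τ_{x,ω}, τ_{x,ω}C†],[0,0,id]]` is in `O(q,k)`. -/
theorem stmt_16
    {k : Type*} [Field k] [CharP k 2]
    {W : Type*} [AddCommGroup W] [Module k W] [FiniteDimensional k W]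
    (q : W → k) (hq : ∀ (a : k) (w : W), q (a • w) = a ^ 2 * q w)
    (B : LinearMap.BilinForm k W)
    (hB : ∀ w w' : W, B w w' = q (w + w') + q w + q w')
    (hnd : ∀ w : W, (∀ w' : W, B w w' = 0) → w = 0)
    (l nX : ℕ) (u v : Fin l → W) (x : Fin nX → W)
    (huo : ∀ i j, B (u i) (u j) = 0)
    (hvo : ∀ i j, B (v i) (v j) = 0)
    (huv : ∀ i j, B (u i) (v j) = if i = j then 1 else 0)
    (hux : ∀ i j, B (u i) (x j) = 0)
    (hvx : ∀ i j, B (v i) (x j) = 0)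
    (hxli : LinearIndependent k x)
    (hspan : Submodule.span k (Set.range u ∪ Set.range v ∪ Set.range x) = ⊤)
    (SU SV SX : Submodule k W)
    (hSU : SU = Submodule.span k (Set.range u))
    (hSV : SV = Submodule.span k (Set.range v))
    (hSX : SX = Submodule.span k (Set.range x))
    -- `span U` is anisotropic
    (hUan : ∀ a : SU, a ≠ 0 → q (a : W) ≠ 0)
    -- the symplectic transvection `τ_{x₀,ω}` on `span X`
    (x₀ : SX) (ω : k) (hω : ω ≠ 0)
    (τxω : SX →ₗ[k] SX)
    (hτxω : ∀ z : SX, (τxω z : W) = (z : W) + (ω * B (x₀ : W) (z : W)) • (x₀ : W))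
    -- `C` with `q(τ_{x,ω}(z) + Cz) = q(z)` for all `z ∈ span X`
    (C : SX →ₗ[k] SU)
    (hC : ∀ z : SX, q ((τxω z : W) + (C z : W)) = q (z : W))
    -- `C†` determined by `B(v, Cz) = B(C†v, z)`
    (Cdag : SV →ₗ[k] SX)
    (hCdag : ∀ (y : SV) (z : SX), B (y : W) ((C z : W)) = B ((Cdag y : W)) (z : W)) :
    ∃ (M : SV →ₗ[k] SU) (T : W ≃ₗ[k] W),
      (∀ a : SU, T (a : W) = (a : W)) ∧
      (∀ z : SX, T (z : W) = (τxω z : W) + (C z : W)) ∧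
      (∀ y : SV, T (y : W) = (y : W) + (τxω (Cdag y) : W) + (M y : W)) ∧
      (∀ w, q (T w) = q w) := by
  subst hSU hSV hSX
  have h2 : (2 : k) = 0 := CharTwo.two_eq_zero
  have hsymm (a b : W) : B a b = B b a := by rw [hB, hB, add_comm a b]; ring
  have hadd (a b : W) : q (a + b) = q a + q b + B a b := by
    rw [hB]; linear_combination (-(q a) - q b) * h2
  have hUU {a b : W} := B.eq_zero_of_mem_span huo (a := a) (b := b)
  have hUX {a b : W} := B.eq_zero_of_mem_span hux (a := a) (b := b)
  have hVX {a b : W} := B.eq_zero_of_mem_span hvx (a := a) (b := b)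
  have hXnd (z : W) (hz : z ∈ Submodule.span k (Set.range x))
      (h : ∀ z' ∈ Submodule.span k (Set.range x), B z z' = 0) : z = 0 := by
    refine hnd z fun w => ?_
    have hw : w ∈ Submodule.span k (Set.range u ∪ Set.range v ∪ Set.range x) :=
      hspan ▸ Submodule.mem_top
    induction hw using Submodule.span_induction with
    | mem w hw =>
      rcases hw with (hw | hw) | hw
      · rw [hsymm]; exact hUX (Submodule.subset_span hw) hz
      · rw [hsymm]; exact hVX (Submodule.subset_span hw) hz
      · exact h w (Submodule.subset_span hw)
    | zero => simp
    | add _ _ _ _ h₁ h₂ => simp [h₁, h₂]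
    | smul _ _ _ h₁ => simp [h₁]
  have hqC (z) : q (C z : W) = (B (x₀ : W) (z : W)) ^ 2 * (ω ^ 2 * q (x₀ : W) + ω) := by
    have h := hC z
    rw [hadd, hsymm _ (C z : W), hUX (C z).2 (τxω z).2, hτxω, hadd, hq, map_smul, smul_eq_mul,
      hsymm z x₀] at h
    linear_combination h - (B (x₀ : W) (z : W)) ^ 2 * (ω ^ 2 * q (x₀ : W) + ω) * h2
  have hC0 (z : Submodule.span k (Set.range x)) (hz : B (x₀ : W) (z : W) = 0) : C z = 0 := by
    by_contra hne
    exact hUan _ hne (by rw [hqC, hz]; ring)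
  obtain ⟨u₀, hCu, hs⟩ : ∃ u₀ : Submodule.span k (Set.range u),
      (∀ z : Submodule.span k (Set.range x), C z = B (x₀ : W) (z : W) • u₀) ∧
      ((x₀ : W) + ω⁻¹ • (u₀ : W) = 0 ∨ q ((x₀ : W) + ω⁻¹ • (u₀ : W)) = ω⁻¹) := by
    by_cases hx : (x₀ : W) = 0
    · exact ⟨0, fun z => by simpa using hC0 z (by simp [hx]), Or.inl (by simp [hx])⟩
    · obtain ⟨z, hz, hxz⟩ : ∃ z ∈ Submodule.span k (Set.range x), B (x₀ : W) z ≠ 0 := by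
        by_contra! h
        exact hx (hXnd _ x₀.2 h)
      let z₁ : Submodule.span k (Set.range x) := (B (x₀ : W) z)⁻¹ • ⟨z, hz⟩
      have hz₁ : B (x₀ : W) (z₁ : W) = 1 := by simp [z₁, hxz]
      refine ⟨C z₁, fun z => ?_, Or.inr ?_⟩
      · have h := hC0 (z - B (x₀ : W) (z : W) • z₁) (by simp [hz₁])
        rw [map_sub, map_smul] at h
        exact sub_eq_zero.mp h
      · rw [hadd, hq, hqC, hz₁, map_smul, hsymm, hUX (C z₁).2 x₀.2, smul_zero]
        field_simp
        linear_combination ω * q (x₀ : W) * h2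
  have hdag (y) : (Cdag y : W) = B (u₀ : W) (y : W) • (x₀ : W) := by
    rw [← sub_eq_zero]
    refine hXnd _ (sub_mem (Cdag y).2 (Submodule.smul_mem _ _ x₀.2)) fun z hz => ?_
    have h := hCdag y ⟨z, hz⟩
    rw [hCu, Submodule.coe_smul, map_smul, smul_eq_mul, hsymm y u₀] at h
    simp only [map_sub, map_smul, LinearMap.sub_apply, LinearMap.smul_apply, smul_eq_mul, ← h]
    ring
  have hself : B (x₀ : W) (x₀ : W) = 0 := by
    have h0 : q 0 = 0 := by simpa using hq 0 0
    have hxx : (x₀ : W) + x₀ = 0 := by rw [← two_smul k, h2, zero_smul]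
    rw [hB, hxx, h0]; linear_combination q (x₀ : W) * h2
  obtain ⟨T, hT, hqT⟩ := exists_orthogonal_transvection q hq B hB _ ω hs
  refine ⟨((ω⁻¹ • B (u₀ : W)).comp (Submodule.subtype _)).smulRight u₀, T,
    fun a => ?_, fun z => ?_, fun y => ?_, hqT⟩
  · simp [hT, hUU u₀.2 a.2, hsymm x₀ a, hUX a.2 x₀.2]
  · simp [hT, hτxω, hCu, hUX u₀.2 z.2, smul_smul, add_assoc, mul_right_comm ω _ ω⁻¹, hω]
  · simp [hT, hτxω, hdag, hself, hsymm x₀ y, hVX y.2 x₀.2, smul_smul, add_assoc, hω]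
    ring_nf
end

section
/- Let W = W₁ ⊥ rad(W), where W₁ is a maximal nonsingular subspace of W (B is nondegenerate on W₁). Then every involution α ∈ O(q,k) leaves rad(W) invariant and can be written, relative to W = rad(W) ⊕ W₁, as α(g + w) = ρ(g) + ρ(Y(w)) + τ(w) for g ∈ rad(W), w ∈ W₁, where: ρ is a linear automorphism of rad(W) preserving q with ρ² = id; τ is a linear automorphism of W₁ with τ² = id which preserves the bilinear form B on W₁ (τ ∈ Sp(B_{W₁},k)); Y : W₁ → rad(W) is linear with Y = ρYτ; and q(τ(w) + ρ(Y(w))) = q(w) for all w ∈ W₁. -/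
/-- For `W = W₁ ⊥ rad(W)`, every involution `α ∈ O(q,k)` leaves `rad(W)`
invariant and has the block form `α(g + w) = ρ(g) + ρ(Y(w)) + τ(w)` with `ρ` an involutive
isometry of `rad(W)`, `τ` an involutive element of `Sp(B_{W₁},k)`, `Y : W₁ → rad(W)` linear
with `Y = ρYτ`, and `q(τ(w) + ρ(Y(w))) = q(w)` for all `w ∈ W₁`. -/
theorem stmt_18
    {k : Type*} [Field k] [CharP k 2]
    {W : Type*} [AddCommGroup W] [Module k W] [FiniteDimensional k W]
    (q : W → k) (hq : ∀ (a : k) (w : W), q (a • w) = a ^ 2 * q w)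
    (B : LinearMap.BilinForm k W)
    (hB : ∀ w w' : W, B w w' = q (w + w') + q w + q w')
    (R W₁ : Submodule k W)
    (hR : ∀ g : W, g ∈ R ↔ ∀ w : W, B g w = 0)
    (hcompl : IsCompl R W₁)
    (hW₁nd : ∀ w ∈ W₁, (∀ w' ∈ W₁, B w w' = 0) → w = 0)
    (α : W ≃ₗ[k] W)
    (hαO : ∀ w, q (α w) = q w)
    (hα2 : α * α = 1) (hα1 : α ≠ 1) :
    (∀ g ∈ R, α g ∈ R) ∧
    ∃ (ρ : R ≃ₗ[k] R) (τ : W₁ ≃ₗ[k] W₁) (Y : W₁ →ₗ[k] R),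
      (∀ g : R, q ((ρ g : W)) = q (g : W)) ∧
      (∀ g : R, ρ (ρ g) = g) ∧
      (∀ w : W₁, τ (τ w) = w) ∧
      (∀ w w' : W₁, B ((τ w : W)) ((τ w' : W)) = B (w : W) (w' : W)) ∧
      (∀ w : W₁, Y w = ρ (Y (τ w))) ∧
      (∀ w : W₁, q ((τ w : W) + (ρ (Y w) : W)) = q (w : W)) ∧
      (∀ (g : R) (w : W₁), α ((g : W) + (w : W)) = (ρ g : W) + (ρ (Y w) : W) + (τ w : W)) := by
  have hinv (x : W) : α (α x) = x := by
    simpa using LinearEquiv.congr_fun hα2 x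
  have hneg (x : W) : -x = x := by
    have h2 : (2 : k) = 0 := CharTwo.two_eq_zero
    rw [neg_eq_iff_add_eq_zero, ← two_smul k x, h2, zero_smul]
  have hαB (x y : W) : B (α x) (α y) = B x y := by
    rw [hB, hB, ← map_add, hαO, hαO, hαO]
  have hsymm (x y : W) : B x y = B y x := by
    rw [hB, hB, add_comm x y]; ring
  have hαR : ∀ g ∈ R, α g ∈ R := by
    intro g hg
    rw [hR] at hg ⊢
    intro w
    rw [← hinv w, hαB, hg]
  have hRl (g : R) (x : W) : B g x = 0 := (hR g).1 g.2 x
  have hRr (g : R) (x : W) : B x g = 0 := by rw [hsymm, hRl]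
  refine ⟨hαR, ?_⟩
  let r : R →ₗ[k] R := α.toLinearMap.restrict hαR
  have hr (g : R) : r (r g) = g := Subtype.ext (hinv g)
  let t : W₁ →ₗ[k] W₁ :=
    W₁.projectionOnto R hcompl.symm ∘ₗ α.toLinearMap ∘ₗ W₁.subtype
  let Z : W₁ →ₗ[k] R :=
    R.projectionOnto W₁ hcompl ∘ₗ α.toLinearMap ∘ₗ W₁.subtype
  have hα (w : W₁) : α w = (Z w : W) + t w :=
    (Submodule.projection_add_projection_eq_self hcompl (α w)).symm
  have hsq (w : W₁) : ((r (Z w) + Z (t w) : R) : W) + (t (t w) - w : W₁) = 0 := by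
    have h := hinv w
    rw [hα, map_add, hα] at h
    have hrZ : (r (Z w) : W) = α (Z w) := rfl
    push_cast
    rw [hrZ, sub_eq_add_neg, ← sub_eq_zero.2 h]
    abel
  have hcomp (g : R) (w : W₁) (h : (g : W) + w = 0) : g = 0 ∧ w = 0 := by
    have hg : (g : W) = 0 := Submodule.disjoint_def.1 hcompl.disjoint g g.2 <| by
      rw [eq_neg_of_add_eq_zero_left h]; exact W₁.neg_mem w.2
    refine ⟨Subtype.ext hg, Subtype.ext ?_⟩
    simpa [hg] using h
  have ht (w : W₁) : t (t w) = w := sub_eq_zero.1 (hcomp _ _ (hsq w)).2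
  have hZ (w : W₁) : Z (t w) = r (Z w) := by
    rw [eq_neg_of_add_eq_zero_right (hcomp _ _ (hsq w)).1]
    exact Subtype.ext (hneg _)
  refine ⟨.ofInvolutive r hr, .ofInvolutive t ht, r ∘ₗ Z, ?_, hr, ht, ?_, ?_, ?_, ?_⟩
  · exact fun g => hαO g
  · intro w w'
    change B (t w) (t w') = _
    rw [← hαB w w', hα, hα]
    simp [hRl, hRr]
  · intro w
    change r (Z w) = r (r (Z (t w)))
    rw [hr, hZ]
  · intro w
    change q ((t w : W) + r (r (Z w))) = _
    rw [hr, add_comm, ← hα, hαO]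
  · intro g w
    change _ = α g + (r (r (Z w)) : W) + t w
    rw [hr, map_add, hα, add_assoc]
end

section
/- Let W = W₁ ⊥ rad(W), with W₁ a maximal nonsingular subspace. For i = 1, 2 let α_i ∈ O(q,k) be an involution written, relative to W = rad(W) ⊕ W₁, as α_i(g + w) = ρ_i(g) + Y_i(w) + τ_i(w) for g ∈ rad(W), w ∈ W₁, where ρ_i is a q-preserving linear automorphism of rad(W), Y_i : W₁ → rad(W) is linear, and τ_i is a linear automorphism of W₁ preserving B on W₁. Then α₁ and α₂ are conjugate in O(q,k) if and only if there exist a q-preserving linear automorphism ψ of rad(W), a B-preserving linear automorphism μ of W₁ (μ ∈ Sp(B_{W₁},k)), and a linear map Z : W₁ → rad(W) satisfying q(w) = q(μ(w)) + q(Z(w)) for all w ∈ W₁ (so that g + w ↦ ψ(g) + ψ(Z(w)) + μ(w) lies in O(q,k)), such that: (1) ψρ₁ψ⁻¹ = ρ₂; (2) μτ₁μ⁻¹ = τ₂; and (3) ψ ∘ (ρ₁Z + Zτ₁ + Y₁) ∘ μ⁻¹ = Y₂. -/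
/-- Components relative to a direct sum decomposition are unique. -/
theorem Submodule.coe_add_coe_inj_of_disjoint {k W : Type*} [Ring k] [AddCommGroup W] [Module k W]
    {R S : Submodule k W} (h : Disjoint R S) {g g' : R} {w w' : S}
    (e : (g : W) + (w : W) = (g' : W) + (w' : W)) : g = g' ∧ w = w' := by
  have hd : (g : W) - g' = w' - w := by
    rw [sub_eq_sub_iff_add_eq_add, e, add_comm]
  have h0 : (g : W) - g' = 0 := Submodule.disjoint_def.1 h _ (R.sub_mem g.2 g'.2)
    (hd ▸ S.sub_mem w'.2 w.2)
  exact ⟨Subtype.ext (sub_eq_zero.1 h0), Subtype.ext (sub_eq_zero.1 (hd ▸ h0)).symm⟩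

/-- A block upper-triangular isomorphism intertwines two block upper-triangular maps exactly when
the blocks satisfy the corresponding relations. -/
theorem block_intertwine_iff {k W : Type*} [Ring k] [AddCommGroup W] [Module k W]
    {R S : Submodule k W} (h : IsCompl R S) (α₁ α₂ φ : W ≃ₗ[k] W)
    (ρ₁ ρ₂ ψ : R ≃ₗ[k] R) (τ₁ τ₂ μ : S ≃ₗ[k] S) (Y₁ Y₂ Z : S →ₗ[k] R)
    (hα₁ : ∀ (g : R) (w : S), α₁ ((g : W) + (w : W)) = (ρ₁ g : W) + (Y₁ w : W) + (τ₁ w : W))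
    (hα₂ : ∀ (g : R) (w : S), α₂ ((g : W) + (w : W)) = (ρ₂ g : W) + (Y₂ w : W) + (τ₂ w : W))
    (hφ : ∀ (g : R) (w : S), φ ((g : W) + (w : W)) = (ψ g : W) + (ψ (Z w) : W) + (μ w : W)) :
    φ * α₁ * φ⁻¹ = α₂ ↔
      (∀ g, ψ (ρ₁ g) = ρ₂ (ψ g)) ∧ (∀ w, μ (τ₁ w) = τ₂ (μ w)) ∧
        ∀ w, ψ (Y₁ w) + ψ (Z (τ₁ w)) = ρ₂ (ψ (Z w)) + Y₂ (μ w) := by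
  have hl (g : R) (w : S) : φ (α₁ (g + w)) =
      ((ψ (ρ₁ g) + (ψ (Y₁ w) + ψ (Z (τ₁ w))) : R) : W) + (μ (τ₁ w) : W) := by
    rw [hα₁, ← Submodule.coe_add, hφ]
    simp [add_assoc]
  have hr (g : R) (w : S) : α₂ (φ (g + w)) =
      ((ρ₂ (ψ g) + (ρ₂ (ψ (Z w)) + Y₂ (μ w)) : R) : W) + (τ₂ (μ w) : W) := by
    rw [hφ, ← Submodule.coe_add, hα₂]
    simp [add_assoc]
  rw [mul_inv_eq_iff_eq_mul]
  constructor
  · intro e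
    have key (g : R) (w : S) := Submodule.coe_add_coe_inj_of_disjoint h.disjoint
      ((hl g w).symm.trans ((LinearEquiv.congr_fun e (g + w)).trans (hr g w)))
    refine ⟨fun g => ?_, fun w => (key 0 w).2, fun w => ?_⟩
    · simpa using (key g 0).1
    · simpa using (key 0 w).1
  · rintro ⟨e₁, e₂, e₃⟩
    ext x
    obtain ⟨g, hg, w, hw, rfl⟩ := Submodule.mem_sup.1 (h.sup_eq_top ▸ Submodule.mem_top (x := x))
    have := (hl ⟨g, hg⟩ ⟨w, hw⟩).trans (Eq.trans (by rw [e₁, e₂, e₃]) (hr ⟨g, hg⟩ ⟨w, hw⟩).symm)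
    exact this

/-- An automorphism preserving `R` is block upper-triangular for any complement of `R`. -/
theorem exists_block_of_preserves {k W : Type*} [Field k] [AddCommGroup W] [Module k W]
    [FiniteDimensional k W] {R S : Submodule k W} (h : IsCompl R S) (φ : W ≃ₗ[k] W)
    (hR : ∀ x, φ x ∈ R ↔ x ∈ R) :
    ∃ (ψ : R ≃ₗ[k] R) (μ : S ≃ₗ[k] S) (Z : S →ₗ[k] R), ∀ (g : R) (w : S),
      φ ((g : W) + (w : W)) = (ψ g : W) + (ψ (Z w) : W) + (μ w : W) := by
  let e := Submodule.prodEquivOfIsCompl R S h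
  let p : W →ₗ[k] R × S := e.symm.toLinearMap
  have hp (x : W) : (((p x).1 : R) : W) + ((p x).2 : W) = x := e.apply_symm_apply x
  let ψ : R ≃ₗ[k] R := φ.ofSubmodules R R (by
    ext x
    rw [Submodule.mem_map_equiv, ← hR, φ.apply_symm_apply])
  let m : S →ₗ[k] S := LinearMap.snd k R S ∘ₗ p ∘ₗ φ.toLinearMap ∘ₗ S.subtype
  have hm : Function.Injective m := by
    rw [injective_iff_map_eq_zero]
    intro w hw
    have h1 := hp (φ w)
    have h2 : (p (φ w)).2 = 0 := hw
    rw [h2, Submodule.coe_zero, add_zero] at h1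
    have h3 : (w : W) ∈ R := (hR _).1 (h1 ▸ (p (φ w)).1.2)
    exact Subtype.ext (Submodule.disjoint_def.1 h.disjoint _ h3 w.2)
  refine ⟨ψ, LinearEquiv.ofInjectiveEndo m hm,
    ψ.symm.toLinearMap ∘ₗ LinearMap.fst k R S ∘ₗ p ∘ₗ φ.toLinearMap ∘ₗ S.subtype, fun g w => ?_⟩
  have h1 : φ w = ((p (φ w)).1 : W) + (m w : W) := (hp (φ w)).symm
  rw [map_add, h1]
  simp [ψ, add_assoc]

/-- Every choice of blocks is realised by a block upper-triangular automorphism. -/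
theorem exists_equiv_of_block {k W : Type*} [Ring k] [AddCommGroup W] [Module k W]
    {R S : Submodule k W} (h : IsCompl R S) (ψ : R ≃ₗ[k] R) (μ : S ≃ₗ[k] S) (Z : S →ₗ[k] R) :
    ∃ φ : W ≃ₗ[k] W, ∀ (g : R) (w : S),
      φ ((g : W) + (w : W)) = (ψ g : W) + (ψ (Z w) : W) + (μ w : W) := by
  let e := Submodule.prodEquivOfIsCompl S R h.symm
  refine ⟨e.symm ≪≫ₗ μ.skewProd ψ (ψ.toLinearMap ∘ₗ Z) ≪≫ₗ e, fun g w => ?_⟩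
  have he : e.symm ((g : W) + w) = (w, g) := by
    rw [LinearEquiv.symm_apply_eq, add_comm]
    rfl
  simp only [LinearEquiv.trans_apply, he]
  simp [e, add_comm]


/-- For `W = W₁ ⊥ rad(W)` and involutions `α₁, α₂ ∈ O(q,k)` with block data
`(ρᵢ, Yᵢ, τᵢ)`, the involutions are conjugate in `O(q,k)` iff there are a `q`-preserving
automorphism `ψ` of `rad(W)`, a `B`-preserving automorphism `μ` of `W₁`, and a linear
`Z : W₁ → rad(W)` with `q(w) = q(μ(w)) + q(Z(w))`, such that `ψρ₁ψ⁻¹ = ρ₂`,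
`μτ₁μ⁻¹ = τ₂`, and `ψ ∘ (ρ₁Z + Zτ₁ + Y₁) ∘ μ⁻¹ = Y₂`. -/
theorem stmt_19
    {k : Type*} [Field k] [CharP k 2]
    {W : Type*} [AddCommGroup W] [Module k W] [FiniteDimensional k W]
    (q : W → k) (hq : ∀ (a : k) (w : W), q (a • w) = a ^ 2 * q w)
    (B : LinearMap.BilinForm k W)
    (hB : ∀ w w' : W, B w w' = q (w + w') + q w + q w')
    (R W₁ : Submodule k W)
    (hR : ∀ g : W, g ∈ R ↔ ∀ w : W, B g w = 0)
    (hcompl : IsCompl R W₁)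
    (hW₁nd : ∀ w ∈ W₁, (∀ w' ∈ W₁, B w w' = 0) → w = 0)
    (α₁ α₂ : W ≃ₗ[k] W)
    (hα₁O : ∀ w, q (α₁ w) = q w) (hα₂O : ∀ w, q (α₂ w) = q w)
    (hα₁2 : α₁ * α₁ = 1) (hα₁1 : α₁ ≠ 1)
    (hα₂2 : α₂ * α₂ = 1) (hα₂1 : α₂ ≠ 1)
    (ρ₁ ρ₂ : R ≃ₗ[k] R) (τ₁ τ₂ : W₁ ≃ₗ[k] W₁) (Y₁ Y₂ : W₁ →ₗ[k] R)
    (hρ₁O : ∀ g : R, q ((ρ₁ g : W)) = q (g : W))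
    (hρ₂O : ∀ g : R, q ((ρ₂ g : W)) = q (g : W))
    (hτ₁B : ∀ w w' : W₁, B ((τ₁ w : W)) ((τ₁ w' : W)) = B (w : W) (w' : W))
    (hτ₂B : ∀ w w' : W₁, B ((τ₂ w : W)) ((τ₂ w' : W)) = B (w : W) (w' : W))
    (hα₁blk : ∀ (g : R) (w : W₁),
      α₁ ((g : W) + (w : W)) = (ρ₁ g : W) + (Y₁ w : W) + (τ₁ w : W))
    (hα₂blk : ∀ (g : R) (w : W₁),
      α₂ ((g : W) + (w : W)) = (ρ₂ g : W) + (Y₂ w : W) + (τ₂ w : W)) :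
    (∃ φ : W ≃ₗ[k] W, (∀ w, q (φ w) = q w) ∧ φ * α₁ * φ⁻¹ = α₂) ↔
      ∃ (ψ : R ≃ₗ[k] R) (μ : W₁ ≃ₗ[k] W₁) (Z : W₁ →ₗ[k] R),
        (∀ g : R, q ((ψ g : W)) = q (g : W)) ∧
        (∀ w w' : W₁, B ((μ w : W)) ((μ w' : W)) = B (w : W) (w' : W)) ∧
        (∀ w : W₁, q (w : W) = q ((μ w : W)) + q ((Z w : W))) ∧
        (∀ g : R, ψ (ρ₁ (ψ.symm g)) = ρ₂ g) ∧
        (∀ w : W₁, μ (τ₁ (μ.symm w)) = τ₂ w) ∧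
        (∀ w : W₁,
          ψ (ρ₁ (Z (μ.symm w)) + Z (τ₁ (μ.symm w)) + Y₁ (μ.symm w)) = Y₂ w) := by
  have two : (2 : k) = 0 := CharTwo.two_eq_zero
  have radical_add (g : R) (w : W) : q (g + w) = q g + q w := by
    have := (hR g).1 g.2 w
    rw [hB] at this
    linear_combination this - (q g + q w) * two
  have block_q (φ : W ≃ₗ[k] W) (ψ : R ≃ₗ[k] R) (μ : W₁ ≃ₗ[k] W₁) (Z : W₁ →ₗ[k] R)
      (hφ : ∀ (g : R) (w : W₁), φ (g + w) = (ψ g : W) + (ψ (Z w) : W) + (μ w : W))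
      (g : R) (w : W₁) : q (φ (g + w)) = q (ψ g) + (q (ψ (Z w)) + q (μ w)) := by
    rw [hφ, add_assoc, radical_add, radical_add]
  have q_zero : q 0 = 0 := by simpa using hq 0 0
  have blocks_iff (φ : W ≃ₗ[k] W) (ψ : R ≃ₗ[k] R) (μ : W₁ ≃ₗ[k] W₁) (Z : W₁ →ₗ[k] R)
      (hφ : ∀ (g : R) (w : W₁), φ (g + w) = (ψ g : W) + (ψ (Z w) : W) + (μ w : W)) :
      φ * α₁ * φ⁻¹ = α₂ ↔ (∀ g : R, ψ (ρ₁ (ψ.symm g)) = ρ₂ g) ∧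
        (∀ w : W₁, μ (τ₁ (μ.symm w)) = τ₂ w) ∧
        (∀ w : W₁,
          ψ (ρ₁ (Z (μ.symm w)) + Z (τ₁ (μ.symm w)) + Y₁ (μ.symm w)) = Y₂ w) := by
    rw [block_intertwine_iff hcompl α₁ α₂ φ ρ₁ ρ₂ ψ τ₁ τ₂ μ Y₁ Y₂ Z hα₁blk hα₂blk hφ]
    have add_self (g : R) : g + g = 0 := by rw [← two_smul k, two, zero_smul]
    have hψ := ψ.surjective.forall (p := fun g => ψ (ρ₁ (ψ.symm g)) = ρ₂ g)
    have hμ := μ.surjective.forall (p := fun w => μ (τ₁ (μ.symm w)) = τ₂ w)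
    have hY := μ.surjective.forall (p := fun w =>
      ψ (ρ₁ (Z (μ.symm w)) + Z (τ₁ (μ.symm w)) + Y₁ (μ.symm w)) = Y₂ w)
    rw [hψ, hμ, hY]
    simp only [LinearEquiv.symm_apply_apply]
    refine and_congr_right fun hρ => and_congr_right fun _ => forall_congr' fun w => ?_
    rw [← hρ, map_add, map_add, ← sub_eq_iff_eq_add', sub_eq_add_neg,
      neg_eq_of_add_eq_zero_left (add_self _)]
    exact Eq.congr_left (by abel)
  constructor
  · rintro ⟨φ, hφq, hconj⟩
    have hφB (x y : W) : B (φ x) (φ y) = B x y := by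
      rw [hB, hB, ← map_add, hφq, hφq, hφq]
    have hφR (x : W) : φ x ∈ R ↔ x ∈ R := by
      rw [hR, hR, φ.surjective.forall]
      simp only [hφB]
    obtain ⟨ψ, μ, Z, hφ⟩ := exists_block_of_preserves hcompl φ hφR
    have hψ (g : R) : q (ψ g) = q g := by
      have := block_q φ ψ μ Z hφ g 0
      simpa [hφq, q_zero] using this.symm
    have hμ (w : W₁) : q w = q (μ w) + q (Z w) := by
      have := block_q φ ψ μ Z hφ 0 w
      simpa [hφq, q_zero, hψ, add_comm] using this
    refine ⟨ψ, μ, Z, hψ, fun w w' => ?_, hμ, (blocks_iff φ ψ μ Z hφ).1 hconj⟩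
    have h1 (w : W₁) : φ w = (ψ (Z w) : W) + μ w := by simpa using hφ 0 w
    have h2 (g : R) (x : W) : B x g = 0 := by
      have := (hR g).1 g.2 x
      rw [hB] at this ⊢
      rw [add_comm x, ← this]
      ring
    rw [← hφB w w', h1, h1]
    simp [(hR _).1 (ψ (Z w)).2, h2]
  · rintro ⟨ψ, μ, Z, hψ, -, hμ, hrel⟩
    obtain ⟨φ, hφ⟩ := exists_equiv_of_block hcompl ψ μ Z
    refine ⟨φ, fun x => ?_, (blocks_iff φ ψ μ Z hφ).2 hrel⟩
    obtain ⟨g, hg, w, hw, rfl⟩ :=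
      Submodule.mem_sup.1 (hcompl.sup_eq_top ▸ Submodule.mem_top (x := x))
    have := block_q φ ψ μ Z hφ ⟨g, hg⟩ ⟨w, hw⟩
    have h1 := radical_add ⟨g, hg⟩ w
    have h2 := hμ ⟨w, hw⟩
    simp only [hψ] at this h1 h2
    rw [this, h1, h2, add_comm (q (μ _))]
end
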